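/- Let n ≥ 3, let 1 ≤ k ≤ n−2, and let K be any field. A torus element t = (t_0, t_1, …, t_n) ∈ (Kˣ)^{n+1} satisfies α_i(t) = 1 for every simple root α_i of GSpin_{2n} with i ≠ k if and only if there exists ε ∈ Kˣ with ε² = 1 such that t_1 = ⋯ = t_k and t_{k+1} = ⋯ = t_n = ε. Hence the center of the standard Levi subgroup M ≅ GL_k × GSpin_{2(n−k)} is A_k ∪ ζ_kA_k with A_k = {e_0^*(λ)e_1^*(μ)⋯e_k^*(μ) : λ, μ ∈ Kˣ} and ζ_k = e_{k+1}^*(−1)⋯e_n^*(−1). Moreover, for k = n the condition α_i(t) = 1 for all i ≠ n holds if and only if t_1 = t_2 = ⋯ = t_n. -/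

import Mathlib

/-!
Triviality of `α_i = e_i - e_{i+1}` on `t` says `t_i = t_{i+1}`. Omitting `α_k` cuts the coordinates
`t_1, …, t_n` into the two blocks `t_1, …, t_k` and `t_{k+1}, …, t_n`, each of which is constant
(`torus_eq_on_block`). As `k ≤ n - 2`, both `t_{n-1}` and `t_n` lie in the second block, so
`α_n = e_{n-1} + e_n` says that the common value `ε` there satisfies `ε² = 1`
(`simple_roots_trivial_iff`). In a field this means `ε = 1` or `ε = -1`, which are the two cosets
`A_k` and `ζ_k A_k` (`block_constant_iff_coset`). For `k = n` there is a single block.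
-/

/-- A tuple whose neighbouring coordinates agree throughout `[a, b]` is constant on `[a, b]`. -/
theorem torus_eq_on_block {G : Type*} {n : ℕ} (t : Fin (n + 1) → G) (a b : ℕ)
    (h : ∀ (i : ℕ) (hi : i < n + 1) (hi' : i + 1 < n + 1), a ≤ i → i + 1 ≤ b →
      t ⟨i, hi⟩ = t ⟨i + 1, hi'⟩)
    (ha : a < n + 1) (i : ℕ) (hi : i < n + 1) (hai : a ≤ i) (hib : i ≤ b) :
    t ⟨i, hi⟩ = t ⟨a, ha⟩ := by
  induction i, hai using Nat.le_induction with
  | base => rfl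
  | succ m ham ih => exact (h m (by omega) hi ham hib).symm.trans (ih (by omega) (by omega))

/-- The simple roots other than `α_k` are trivial on `t` exactly when `t` is constant on each of
the two blocks, with a value of square `1` on the second. -/
theorem simple_roots_trivial_iff {G : Type*} [CommGroup G] (n k : ℕ)
    (hkn : k < n - 1) (t : Fin (n + 1) → G)
    (b1 : 1 < n + 1) (bp : n - 1 < n + 1) (bn : n < n + 1) :
    ((∀ (i : ℕ) (hi : i < n + 1) (hi' : i + 1 < n + 1), 1 ≤ i → i ≠ k →
        t ⟨i, hi⟩ / t ⟨i + 1, hi'⟩ = 1) ∧ t ⟨n - 1, bp⟩ * t ⟨n, bn⟩ = 1) ↔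
    ∃ ε : G, ε ^ 2 = 1 ∧
      (∀ (i : ℕ) (hi : i < n + 1), 1 ≤ i → i ≤ k → t ⟨i, hi⟩ = t ⟨1, b1⟩) ∧
      (∀ (i : ℕ) (hi : i < n + 1), k + 1 ≤ i → t ⟨i, hi⟩ = ε) := by
  constructor
  · rintro ⟨h, hlast⟩
    have h2 (i : ℕ) (hi : i < n + 1) (hki : k + 1 ≤ i) : t ⟨i, hi⟩ = t ⟨k + 1, by omega⟩ :=
      torus_eq_on_block t (k + 1) n
        (fun i hi hi' hki _ => div_eq_one.mp (h i hi hi' (by omega) (by omega)))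
        _ i hi hki (by omega)
    refine ⟨t ⟨k + 1, by omega⟩, ?_, ?_, h2⟩
    · rw [h2 (n - 1) bp (by omega), h2 n bn (by omega)] at hlast
      rw [sq, hlast]
    · intro i hi h1i hik
      exact torus_eq_on_block t 1 k
        (fun i hi hi' h1i hik => div_eq_one.mp (h i hi hi' h1i (by omega))) b1 i hi h1i hik
  · rintro ⟨ε, hε, h1, h2⟩
    refine ⟨fun i hi hi' h1i hik => div_eq_one.mpr ?_, ?_⟩
    · rcases Nat.lt_or_gt_of_ne hik with hlt | hgt
      · rw [h1 i hi h1i (by omega), h1 (i + 1) hi' (by omega) (by omega)]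
      · rw [h2 i hi (by omega), h2 (i + 1) hi' (by omega)]
    · rw [h2 (n - 1) bp (by omega), h2 n bn (by omega), ← sq, hε]

/-- The elements described by the two blocks form the union of `A_k` and `ζ_k A_k`. -/
theorem block_constant_iff_coset (n k : ℕ) (hk1 : 1 ≤ k)
    (K : Type*) [Field K] (t : Fin (n + 1) → Kˣ) (b1 : 1 < n + 1) :
    (∃ ε : Kˣ, ε ^ 2 = 1 ∧
      (∀ (i : ℕ) (hi : i < n + 1), 1 ≤ i → i ≤ k → t ⟨i, hi⟩ = t ⟨1, b1⟩) ∧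
      (∀ (i : ℕ) (hi : i < n + 1), k + 1 ≤ i → t ⟨i, hi⟩ = ε)) ↔
    ((∃ l μ : Kˣ, t = fun j : Fin (n + 1) =>
        if (j : ℕ) = 0 then l else if (j : ℕ) ≤ k then μ else 1) ∨
     (∃ l μ : Kˣ, t = fun j : Fin (n + 1) =>
        if (j : ℕ) = 0 then l else if (j : ℕ) ≤ k then μ else -1)) := by
  have shape (ε : Kˣ) :
      ((∀ (i : ℕ) (hi : i < n + 1), 1 ≤ i → i ≤ k → t ⟨i, hi⟩ = t ⟨1, b1⟩) ∧
        (∀ (i : ℕ) (hi : i < n + 1), k + 1 ≤ i → t ⟨i, hi⟩ = ε)) ↔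
      ∃ l μ : Kˣ, t = fun j : Fin (n + 1) =>
        if (j : ℕ) = 0 then l else if (j : ℕ) ≤ k then μ else ε := by
    constructor
    · rintro ⟨h1, h2⟩
      refine ⟨t 0, t ⟨1, b1⟩, ?_⟩
      funext ⟨j, hj⟩
      dsimp only
      split_ifs with h0 hjk
      · subst h0
        rfl
      · exact h1 j hj (by omega) hjk
      · exact h2 j hj (by omega)
    · rintro ⟨l, μ, rfl⟩
      refine ⟨fun i hi h1i hik => ?_, fun i hi hki => ?_⟩
      · simp [hik, hk1, show i ≠ 0 by omega]
      · simp [show i ≠ 0 by omega, show ¬ i ≤ k by omega]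
  simp only [shape]
  constructor
  · rintro ⟨ε, hε, h⟩
    have hK : (ε : K) ^ 2 = 1 := by rw [← Units.val_pow_eq_pow_val, hε, Units.val_one]
    rcases eq_or_eq_neg_of_sq_eq_sq _ _ (hK.trans (one_pow 2).symm) with h' | h'
    · obtain rfl : ε = 1 := Units.ext (by simpa using h')
      exact Or.inl h
    · obtain rfl : ε = -1 := Units.ext (by simpa using h')
      exact Or.inr h
  · rintro (h | h)
    · exact ⟨1, one_pow 2, h⟩
    · exact ⟨-1, neg_one_sq, h⟩

/-- For `n ≥ 3`, `1 ≤ k ≤ n-2` and any field `K`, a torus element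
`t = (t_0, …, t_n) ∈ (Kˣ)^{n+1}` satisfies `α_i(t) = 1` for every simple root
`α_i` of `GSpin_{2n}` with `i ≠ k` iff there is `ε` with `ε² = 1`,
`t_1 = ⋯ = t_k` and `t_{k+1} = ⋯ = t_n = ε`; hence the center of the Levi
`M ≅ GL_k × GSpin_{2(n-k)}` is `A_k ∪ ζ_k A_k`.  Moreover, for `k = n` the
condition `α_i(t) = 1` for all `i ≠ n` holds iff `t_1 = t_2 = ⋯ = t_n`. -/
theorem gspin_even_levi_center (n k : ℕ) (hn : 3 ≤ n) (hk1 : 1 ≤ k)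
    (hkn : k ≤ n - 2) (K : Type*) [Field K] :
    (∀ t : Fin (n + 1) → Kˣ,
      ((∀ (i : ℕ) (_ : 1 ≤ i) (_ : i ≤ n - 1) (_ : i ≠ k),
          t ⟨i, by omega⟩ / t ⟨i + 1, by omega⟩ = 1) ∧
        t ⟨n - 1, by omega⟩ * t ⟨n, by omega⟩ = 1)
      ↔ ((∃ ε : Kˣ, ε ^ 2 = 1 ∧
            (∀ (i : ℕ) (_ : 1 ≤ i) (_ : i ≤ k), t ⟨i, by omega⟩ = t ⟨1, by omega⟩) ∧
            (∀ (i : ℕ) (_ : k + 1 ≤ i) (_ : i ≤ n), t ⟨i, by omega⟩ = ε)) ∧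
          ((∃ l μ : Kˣ, t = fun j : Fin (n + 1) =>
              if (j : ℕ) = 0 then l else if (j : ℕ) ≤ k then μ else 1) ∨
           (∃ l μ : Kˣ, t = fun j : Fin (n + 1) =>
              if (j : ℕ) = 0 then l else if (j : ℕ) ≤ k then μ else -1))))
    ∧
    (∀ t : Fin (n + 1) → Kˣ,
      (∀ (i : ℕ) (_ : 1 ≤ i) (_ : i ≤ n - 1),
          t ⟨i, by omega⟩ / t ⟨i + 1, by omega⟩ = 1)
      ↔ (∀ (i : ℕ) (_ : 1 ≤ i) (_ : i ≤ n), t ⟨i, by omega⟩ = t ⟨1, by omega⟩)) := by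
  refine ⟨fun t => ?_, fun t => ⟨fun h i hi hin => ?_, fun h i hi hin => ?_⟩⟩
  · have key := simple_roots_trivial_iff n k (by omega) t (by omega) (by omega) (by omega)
    have coset := block_constant_iff_coset n k hk1 K t (by omega)
    constructor
    · rintro ⟨h, hlast⟩
      have hε := key.mp ⟨fun i _ _ hi hik => h i hi (by omega) hik, hlast⟩
      refine ⟨?_, coset.mp hε⟩
      obtain ⟨ε, hε, h1, h2⟩ := hε
      exact ⟨ε, hε, fun i hi hik => h1 i _ hi hik, fun i hi _ => h2 i _ hi⟩
    · rintro ⟨-, hc⟩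
      obtain ⟨h, hlast⟩ := key.mpr (coset.mpr hc)
      exact ⟨fun i hi _ hik => h i _ _ hi hik, hlast⟩
  · exact torus_eq_on_block t 1 n
      (fun i _ _ hi hin => div_eq_one.mp (h i hi (by omega))) _ i _ hi hin
  · rw [h i hi (by omega), h (i + 1) (by omega) (by omega), div_self']
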